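/- Let P and Q be k-dimensional box posets of the same rank s, neither having a side of length 1, let n < s - 1, let A be the set of all elements of rank n in P and B the set of all elements of rank n in Q (viewed inside the diamond product of P and Q). If |A| < |B| and the upper shadow of A has size at least that of the upper shadow of B (or vice versa), then the diamond product of P and Q is not Macaulay. -/

import Mathlib

/-!
Write `A i` and `B i` for level `i` of the two boxes inside the diamond product, and call a set of
elements of one rank initial if it is an initial segment of that rank. Suppose a Macaulay order
exists, and that `|A n| < |B n|` while `|A (n + 1)| ≥ |B (n + 1)|`; since `0 < n` and `n + 1 < s`,
the full levels `A (n + 1)` and `B (n + 1)` are the upper shadows of `A n` and `B n`.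

If `A 1` is initial, then so is `A n`, by taking shadows repeatedly (`initSeg_level`). The initial
segment with `|B n|` elements then properly contains `A n`, so its shadow properly contains
`A (n + 1)` and is larger than the shadow of `B n`, a contradiction (`no_initSeg`). If `B 1` is
initial, the same argument applies with the components exchanged and at level `m = s - n - 1`,
because `|A i| = |A (s - i)|` and likewise for `B`: it gives `|B m| ≤ |A m|` and
`|B (m + 1)| > |A (m + 1)|`.

It remains to see that one of `A 1`, `B 1` is initial (`atoms_of_first_mem`). An atom of a
`k`-dimensional box has `k - 1` or `k` upper covers, two atoms of the same box have exactly one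
upper cover in common and three have none, while atoms of different boxes share none. Say that
the first atom is `x ∈ A 1`, and let the initial segment switch to `B` at `y` before `A 1` is
exhausted. Exchanging `y` for an unused atom of `A 1` shows that this is possible only if `x` is
the only atom before `y`; then `x` and `y` have `k - 1` upper covers and all other atoms have `k`.
For `k ≥ 3` the initial segment of three atoms then has a shadow of size `3 k - 3`, against at
most `3 k - 4` for three atoms of `A 1` including `x`. For `k = 2` both boxes have a side with
two elements, hence all their proper levels have size two and `|A n| = |B n|`.
-/

open Finset

instance {α : Type*} [Fintype α] : Fintype (WithBot α) := inferInstanceAs (Fintype (Option α))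
instance {α : Type*} [Fintype α] : Fintype (WithTop α) := inferInstanceAs (Fintype (Option α))

variable {α : Type*}

open Classical in
noncomputable def shadow [PartialOrder α] [Fintype α] (A : Finset α) : Finset α :=
  Finset.univ.filter (fun b => ∃ a ∈ A, a ⋖ b)

def IsRankFn [PartialOrder α] (rank : α → ℕ) : Prop :=
  (∃ x, rank x = 0 ∧ ∀ y, x ≤ y) ∧ ∀ a b : α, a ⋖ b → rank b = rank a + 1

def IsInitSeg [PartialOrder α] (rank : α → ℕ) (lt : α → α → Prop) (d : ℕ)
    (S : Finset α) : Prop :=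
  (∀ x ∈ S, rank x = d) ∧ ∀ a ∈ S, ∀ b, rank b = d → lt a b → b ∈ S

def MacaulayWith [PartialOrder α] [Fintype α] (rank : α → ℕ)
    (lt : α → α → Prop) : Prop :=
  IsTrichotomous α lt ∧ IsTrans α lt ∧ IsIrrefl α lt ∧
  (∀ d (A S : Finset α), (∀ x ∈ A, rank x = d) → IsInitSeg rank lt d S →
    S.card = A.card → (shadow S).card ≤ (shadow A).card) ∧
  (∀ d (S : Finset α), IsInitSeg rank lt d S → IsInitSeg rank lt (d + 1) (shadow S))

def IsMacaulay [PartialOrder α] [Fintype α] (rank : α → ℕ) : Prop :=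
  ∃ lt : α → α → Prop, MacaulayWith rank lt

abbrev Wedge (P Q : Type*) [PartialOrder P] [PartialOrder Q] [OrderBot P] [OrderBot Q] :=
  WithBot ({p : P // p ≠ ⊥} ⊕ {q : Q // q ≠ ⊥})

def wedgeRank {P Q : Type*} [PartialOrder P] [PartialOrder Q] [OrderBot P] [OrderBot Q]
    (rP : P → ℕ) (rQ : Q → ℕ) : Wedge P Q → ℕ :=
  WithBot.recBotCoe 0 (Sum.elim (fun p => rP p.1) (fun q => rQ q.1))

open Classical in
noncomputable def wedgeInl {P Q : Type*} [PartialOrder P] [PartialOrder Q] [OrderBot P]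
    [OrderBot Q] (p : P) : Wedge P Q :=
  if h : p = ⊥ then ⊥ else
    ((Sum.inl ⟨p, h⟩ : {p : P // p ≠ ⊥} ⊕ {q : Q // q ≠ ⊥}) : Wedge P Q)

open Classical in
noncomputable def wedgeInr {P Q : Type*} [PartialOrder P] [PartialOrder Q] [OrderBot P]
    [OrderBot Q] (q : Q) : Wedge P Q :=
  if h : q = ⊥ then ⊥ else
    ((Sum.inr ⟨q, h⟩ : {p : P // p ≠ ⊥} ⊕ {q : Q // q ≠ ⊥}) : Wedge P Q)

abbrev Diamond (P Q : Type*) [PartialOrder P] [PartialOrder Q] [OrderBot P] [OrderBot Q]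
    [OrderTop P] [OrderTop Q] :=
  WithBot (WithTop ({p : P // p ≠ ⊥ ∧ p ≠ ⊤} ⊕ {q : Q // q ≠ ⊥ ∧ q ≠ ⊤}))

def diamondRank {P Q : Type*} [PartialOrder P] [PartialOrder Q] [OrderBot P] [OrderBot Q]
    [OrderTop P] [OrderTop Q] (rP : P → ℕ) (rQ : Q → ℕ) (s : ℕ) : Diamond P Q → ℕ :=
  WithBot.recBotCoe 0 (WithTop.recTopCoe s (Sum.elim (fun p => rP p.1) (fun q => rQ q.1)))

def diamondInl {P Q : Type*} [PartialOrder P] [PartialOrder Q] [OrderBot P] [OrderBot Q]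
    [OrderTop P] [OrderTop Q] (p : {p : P // p ≠ ⊥ ∧ p ≠ ⊤}) : Diamond P Q :=
  (((Sum.inl p : {p : P // p ≠ ⊥ ∧ p ≠ ⊤} ⊕ {q : Q // q ≠ ⊥ ∧ q ≠ ⊤}) :
    WithTop ({p : P // p ≠ ⊥ ∧ p ≠ ⊤} ⊕ {q : Q // q ≠ ⊥ ∧ q ≠ ⊤})) : Diamond P Q)

abbrev Box (a b : ℕ) := Fin a × Fin b

def boxRank {a b : ℕ} : Box a b → ℕ := fun p => p.1.val + p.2.val

abbrev BoxF {n : ℕ} (d : Fin n → ℕ) := ∀ i, Fin (d i + 1)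

def boxFRank {n : ℕ} {d : Fin n → ℕ} : BoxF d → ℕ := fun x => ∑ i, (x i).val

def diamondInr {P Q : Type*} [PartialOrder P] [PartialOrder Q] [OrderBot P] [OrderBot Q]
    [OrderTop P] [OrderTop Q] (q : {q : Q // q ≠ ⊥ ∧ q ≠ ⊤}) : Diamond P Q :=
  (((Sum.inr q : {p : P // p ≠ ⊥ ∧ p ≠ ⊤} ⊕ {q : Q // q ≠ ⊥ ∧ q ≠ ⊤}) :
    WithTop ({p : P // p ≠ ⊥ ∧ p ≠ ⊤} ⊕ {q : Q // q ≠ ⊥ ∧ q ≠ ⊤})) : Diamond P Q)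

abbrev WedgeFam {ι : Type*} (P : ι → Type*) [∀ i, PartialOrder (P i)]
    [∀ i, OrderBot (P i)] :=
  WithBot (Σ i, {p : P i // p ≠ ⊥})

def wedgeFamRank {ι : Type*} {P : ι → Type*} [∀ i, PartialOrder (P i)]
    [∀ i, OrderBot (P i)] (rank : ∀ i, P i → ℕ) : WedgeFam P → ℕ :=
  WithBot.recBotCoe 0 (fun s => rank s.1 s.2.1)

abbrev DiamondFam {ι : Type*} (P : ι → Type*) [∀ i, PartialOrder (P i)]
    [∀ i, OrderBot (P i)] [∀ i, OrderTop (P i)] :=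
  WithBot (WithTop (Σ i, {p : P i // p ≠ ⊥ ∧ p ≠ ⊤}))

def diamondFamRank {ι : Type*} {P : ι → Type*} [∀ i, PartialOrder (P i)]
    [∀ i, OrderBot (P i)] [∀ i, OrderTop (P i)] (rank : ∀ i, P i → ℕ) (s : ℕ) :
    DiamondFam P → ℕ :=
  WithBot.recBotCoe 0 (WithTop.recTopCoe s (fun x => rank x.1 x.2.1))

/-! ### Initial segments of a Macaulay order -/

section Segments
open Classical

variable [PartialOrder α] [Fintype α] {r : α → ℕ} {lt : α → α → Prop}

lemma mem_shadow {A : Finset α} {b : α} : b ∈ shadow A ↔ ∃ a ∈ A, a ⋖ b := by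
  simp [_root_.shadow]

lemma shadow_mono {A B : Finset α} (h : A ⊆ B) : shadow A ⊆ shadow B := by
  intro b hb
  obtain ⟨a, ha, hab⟩ := mem_shadow.1 hb
  exact mem_shadow.2 ⟨a, h ha, hab⟩

lemma shadow_insert (x : α) (S : Finset α) :
    shadow (insert x S) = shadow S ∪ shadow {x} := by
  ext b
  simp only [mem_shadow, mem_union, mem_insert, mem_singleton, exists_eq_or_imp, exists_eq_left]
  exact or_comm

/-- Initial segments of the same level are totally ordered by inclusion. -/
lemma initSeg_subset (hM : MacaulayWith r lt) {i : ℕ} {S T : Finset α}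
    (hS : IsInitSeg r lt i S) (hT : IsInitSeg r lt i T) (hc : S.card ≤ T.card) : S ⊆ T := by
  by_contra hn
  obtain ⟨x, hxS, hxT⟩ := Finset.not_subset.1 hn
  have hTS : T ⊆ S := by
    intro y hy
    by_cases h1 : lt x y
    · exact hS.2 x hxS y (hT.1 y hy) h1
    by_cases h2 : lt y x
    · exact absurd (hT.2 y hy x (hS.1 x hxS) h2) hxT
    · have := hM.1.trichotomous x y h1 h2
      exact this ▸ hxS
  exact hn (Finset.eq_of_subset_of_card_le hTS hc).symm.subset

/-- Every nonempty set has an element that comes first; as in `IsInitSeg`, the earliest elements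
are those which are largest for `lt`. -/
lemma exists_first (hM : MacaulayWith r lt) (T : Finset α) (hT : T.Nonempty) :
    ∃ m ∈ T, ∀ b ∈ T, b ≠ m → lt b m := by
  obtain ⟨h1, h2, h3, -⟩ := hM
  have : IsTrans α (fun a b => lt b a) := ⟨fun a b c hab hbc => h2.trans _ _ _ hbc hab⟩
  have : Std.Irrefl (fun a b : α => lt b a) := ⟨fun a => h3.irrefl a⟩
  have wf : WellFounded (fun a b : α => lt b a) := Finite.wellFounded_of_trans_of_irrefl _
  obtain ⟨m, hm, hmin⟩ := wf.has_min (T : Set α) hT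
  refine ⟨m, hm, fun b hb hne => ?_⟩
  by_contra hlt
  exact hne (h1.trichotomous b m hlt (hmin b hb))

lemma exists_initSeg (hM : MacaulayWith r lt) (i t : ℕ)
    (ht : t ≤ (univ.filter (fun x => r x = i)).card) :
    ∃ S : Finset α, IsInitSeg r lt i S ∧ S.card = t := by
  induction t with
  | zero => exact ⟨∅, by simp [IsInitSeg], rfl⟩
  | succ t ih =>
    obtain ⟨S, hS, hc⟩ := ih (by omega)
    have hne : ((univ.filter (fun x => r x = i)) \ S).Nonempty := by
      rw [Finset.sdiff_nonempty]
      intro hsub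
      have := Finset.card_le_card hsub
      omega
    obtain ⟨m, hm, hmax⟩ := exists_first hM _ hne
    simp only [mem_sdiff, mem_filter, mem_univ, true_and] at hm hmax
    refine ⟨insert m S, ⟨?_, ?_⟩, by rw [card_insert_of_notMem hm.2, hc]⟩
    · intro x hx
      rcases mem_insert.1 hx with rfl | hx
      · exact hm.1
      · exact hS.1 x hx
    · intro a ha b hb hab
      rcases mem_insert.1 ha with rfl | ha
      · by_contra hbn
        rw [mem_insert, not_or] at hbn
        exact hM.2.2.1.irrefl _ (hM.2.1.trans _ _ _ hab (hmax b ⟨hb, hbn.2⟩ hbn.1))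
      · exact mem_insert_of_mem (hS.2 a ha b hb hab)

/-! ### One component of the diamond product -/

/-- The facts about a `k`-dimensional box of rank `s`, sitting inside the poset `α` as one component
of a diamond product, on which the argument rests. `A i` is level `i` of the box, and
`shadow {x}` is the set of upper covers of `x`. -/
structure BoxLevels (r : α → ℕ) (k s : ℕ) (A : ℕ → Finset α) : Prop where
  rank_eq : ∀ i, ∀ x ∈ A i, r x = i
  shadow_eq : ∀ i, 1 ≤ i → i + 1 < s → shadow (A i) = A (i + 1)
  nonempty : ∀ i, 1 ≤ i → i + 1 < s → ∀ x ∈ A i, (shadow {x}).Nonempty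
  card_symm : ∀ i, i ≤ s → (A (s - i)).card = (A i).card
  card_one : (A 1).card = k
  le_card : ∀ x ∈ A 1, k ≤ (shadow {x}).card + 1
  card_le : ∀ x ∈ A 1, (shadow {x}).card ≤ k
  inter : ∀ x ∈ A 1, ∀ y ∈ A 1, x ≠ y → (shadow {x} ∩ shadow {y}).card = 1
  triple : ∀ x ∈ A 1, ∀ y ∈ A 1, ∀ z ∈ A 1, x ≠ y → x ≠ z → y ≠ z →
    ∀ w, w ∈ shadow {x} → w ∈ shadow {y} → w ∉ shadow {z}
  /-- A two-dimensional box one of whose sides has two elements has all its proper levels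
  of size two. -/
  thin : k = 2 → ∀ x ∈ A 1, (shadow {x}).card = 1 → ∀ i, 1 ≤ i → i < s → (A i).card = 2

variable {k s : ℕ} {A B : ℕ → Finset α}

lemma BoxLevels.shadow_subset (hA : BoxLevels r k s A) {i : ℕ} (h1 : 1 ≤ i) (h2 : i + 1 < s)
    {S : Finset α} (hS : S ⊆ A i) : shadow S ⊆ A (i + 1) :=
  hA.shadow_eq i h1 h2 ▸ shadow_mono hS

/-! ### Comparing the two components -/

lemma initSeg_level (hM : MacaulayWith r lt) (hA : BoxLevels r k s A)
    (h : IsInitSeg r lt 1 (A 1)) (i : ℕ) (h1 : 1 ≤ i) (h2 : i < s) :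
    IsInitSeg r lt i (A i) := by
  induction i, h1 using Nat.le_induction with
  | base => exact h
  | succ i hi ih =>
    rw [← hA.shadow_eq i hi h2]
    exact hM.2.2.2.2 i _ (ih (by omega))

/-- If level `i` of one component is an initial segment and is no larger than level `i` of the
other one, then its shadow is no larger either, and strictly smaller when the level is: an
initial segment as large as the other level contains it, and the extra elements contribute to
the shadow. -/
lemma no_initSeg (hM : MacaulayWith r lt) (hA : BoxLevels r k s A) (hB : BoxLevels r k s B)
    (hcov : ∀ i, 1 ≤ i → i < s → ∀ x, r x = i → x ∈ A i ∨ x ∈ B i)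
    (hdis : ∀ i, 1 ≤ i → i < s → Disjoint (A i) (B i))
    (i : ℕ) (h1 : 1 ≤ i) (h2 : i + 1 < s) (hI : IsInitSeg r lt i (A i))
    (hle : (A i).card ≤ (B i).card) (hge : (B (i + 1)).card ≤ (A (i + 1)).card)
    (hstrict : (A i).card < (B i).card ∨ (B (i + 1)).card < (A (i + 1)).card) : False := by
  rcases hle.eq_or_lt with heq | hlt
  · have := hM.2.2.2.1 i (B i) (A i) (hB.rank_eq i) hI heq
    rw [hA.shadow_eq i h1 h2, hB.shadow_eq i h1 h2] at this
    omega
  · obtain ⟨S, hS, hc⟩ := exists_initSeg hM i (B i).card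
      (card_le_card fun x hx => by simpa using hB.rank_eq i x hx)
    have hmin := hM.2.2.2.1 i (B i) S (hB.rank_eq i) hS hc
    have hAS := initSeg_subset hM hI hS (by omega)
    obtain ⟨y, hyS, hyA⟩ := Finset.exists_mem_notMem_of_card_lt_card (hc ▸ hlt)
    have hyB : y ∈ B i := (hcov i h1 (by omega) y (hS.1 y hyS)).resolve_left hyA
    obtain ⟨w, hw⟩ := hB.nonempty i h1 h2 y hyB
    have hwB : w ∈ B (i + 1) := hB.shadow_subset h1 h2 (singleton_subset_iff.2 hyB) hw
    have hwS : w ∈ shadow S := shadow_mono (singleton_subset_iff.2 hyS) hw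
    have hsub : insert w (A (i + 1)) ⊆ shadow S := by
      rw [← hA.shadow_eq i h1 h2]
      exact insert_subset hwS (shadow_mono hAS)
    have hwA : w ∉ A (i + 1) := fun h => disjoint_left.1 (hdis (i + 1) (by omega) h2) h hwB
    have := card_le_card hsub
    rw [card_insert_of_notMem hwA] at this
    rw [hB.shadow_eq i h1 h2] at hmin
    omega

/-- An inequality forced by a Macaulay order on the atoms: if `S ∪ {y}` is initial, with
`S ⊆ A 1` and `y ∈ B 1`, then replacing `y` by another atom `z` of the first component, which
shares upper covers with the members of `S`, cannot give a smaller shadow. -/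
lemma swap_ineq (hM : MacaulayWith r lt) (hA : BoxLevels r k s A) (hB : BoxLevels r k s B)
    (hdis : Disjoint (A 2) (B 2)) (hs : 2 < s) {S : Finset α} (hSA : S ⊆ A 1)
    {y z : α} (hy : y ∈ B 1) (hz : z ∈ A 1) (hzS : z ∉ S) (hyS : y ∉ S)
    (hI : IsInitSeg r lt 1 (insert y S)) :
    (shadow {y}).card + (shadow S ∩ shadow {z}).card ≤ (shadow {z}).card := by
  have hmin := hM.2.2.2.1 1 (insert z S) (insert y S)
    (fun x hx => hA.rank_eq 1 x (insert_subset hz hSA hx)) hI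
    (by rw [card_insert_of_notMem hyS, card_insert_of_notMem hzS])
  have hd : Disjoint (shadow S) (shadow {y}) :=
    hdis.mono (hA.shadow_subset le_rfl hs hSA)
      (hB.shadow_subset le_rfl hs (singleton_subset_iff.2 hy))
  rw [shadow_insert, shadow_insert, card_union_of_disjoint hd] at hmin
  have := card_union_add_card_inter (shadow S) (shadow {z})
  omega

/-- Three atoms of one component, one with `k - 1` upper covers, have at most `3 k - 4`. -/
lemma three_atoms (hA : BoxLevels r k s A) {x y z : α} (hx : x ∈ A 1) (hy : y ∈ A 1)
    (hz : z ∈ A 1) (hxy : x ≠ y) (hxz : x ≠ z) (hyz : y ≠ z)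
    (hxc : (shadow {x}).card + 1 = k) :
    (shadow {z, y, x}).card + 4 ≤ 3 * k := by
  rw [shadow_insert, shadow_insert]
  have e1 := card_union_add_card_inter (shadow {x}) (shadow {y})
  have e2 := card_union_add_card_inter (shadow {x} ∪ shadow {y}) (shadow {z})
  have i1 := hA.inter x hx y hy hxy
  have i2 := hA.inter x hx z hz hxz
  have i3 := hA.inter y hy z hz hyz
  have hd : Disjoint (shadow {x} ∩ shadow {z}) (shadow {y} ∩ shadow {z}) := by
    rw [disjoint_left]
    intro w h1 h2
    simp only [mem_inter] at h1 h2
    exact hA.triple x hx y hy z hz hxy hxz hyz w h1.1 h2.1 h1.2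
  rw [union_inter_distrib_right, card_union_of_disjoint hd] at e2
  have := hA.card_le y hy
  have := hA.card_le z hz
  omega

/-- If the first atom lies in the component `A`, then either all atoms of `A` precede those
of `B`, or the boxes are two-dimensional and both have a side with two elements. -/
lemma atoms_of_first_mem (hM : MacaulayWith r lt) (hA : BoxLevels r k s A) (hB : BoxLevels r k s B)
    (hcov : ∀ i, 1 ≤ i → i < s → ∀ x, r x = i → x ∈ A i ∨ x ∈ B i)
    (hdis : ∀ i, 1 ≤ i → i < s → Disjoint (A i) (B i)) (hs : 2 < s)
    {x : α} (hx : x ∈ A 1) (hfirst : ∀ b, r b = 1 → b ≠ x → lt b x) :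
    IsInitSeg r lt 1 (A 1) ∨ (k = 2 ∧ (∃ x ∈ A 1, (shadow {x}).card = 1) ∧
      ∃ y ∈ B 1, (shadow {y}).card = 1) := by
  have hd1 := disjoint_left.1 (hdis 1 le_rfl (by omega))
  have hd2 := hdis 2 (by omega) hs
  have irr := hM.2.2.1.irrefl
  have tr := hM.2.1.trans
  have hk : 0 < k := hA.card_one ▸ card_pos.2 ⟨x, hx⟩
  -- `y` is the first atom of `B`, and `S` the set of atoms of `A` that precede it.
  obtain ⟨y, hy, hymax⟩ := exists_first hM (B 1) (card_pos.1 (by rw [hB.card_one]; exact hk))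
  set S := (A 1).filter (lt y) with hSdef
  have hSA : S ⊆ A 1 := filter_subset _ _
  have hyA : y ∉ A 1 := fun h => hd1 h hy
  have hyS : y ∉ S := fun h => hyA (hSA h)
  have hxy : x ≠ y := fun h => hyA (h ▸ hx)
  have hxS : x ∈ S := mem_filter.2 ⟨hx, hfirst y (hB.rank_eq 1 y hy) hxy.symm⟩
  have key : ∀ b, r b = 1 → lt y b → b ∈ S := by
    intro b hb hyb
    rcases hcov 1 le_rfl (by omega) b hb with h | h
    · exact mem_filter.2 ⟨h, hyb⟩
    · by_cases hby : b = y
      · exact absurd (hby ▸ hyb) (irr y)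
      · exact absurd (tr _ _ _ hyb (hymax b h hby)) (irr y)
  have hSI : IsInitSeg r lt 1 S :=
    ⟨fun a ha => hA.rank_eq 1 a (hSA ha),
      fun a ha b hb hab => key b hb (tr _ _ _ (mem_filter.1 ha).2 hab)⟩
  have hySI : IsInitSeg r lt 1 (insert y S) := by
    refine ⟨fun a ha => ?_, fun a ha b hb hab => ?_⟩
    · rcases mem_insert.1 ha with rfl | ha
      · exact hB.rank_eq 1 a hy
      · exact hSI.1 a ha
    · rcases mem_insert.1 ha with rfl | ha
      · exact mem_insert_of_mem (key b hb hab)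
      · exact mem_insert_of_mem (hSI.2 a ha b hb hab)
  by_cases hSeq : S = A 1
  · exact Or.inl (hSeq ▸ hSI)
  right
  have hgen : ∀ z ∈ A 1, z ∉ S → (shadow {y}).card + 1 = k ∧ (shadow {z}).card = k ∧
      ∀ u ∈ S, shadow {u} ∩ shadow {z} = shadow S ∩ shadow {z} := by
    intro z hz hzS
    have h := swap_ineq hM hA hB hd2 hs hSA hy hz hzS hyS hySI
    have h1 := hA.card_le z hz
    have h2 := hB.le_card y hy
    have hsub : ∀ u ∈ S, shadow {u} ∩ shadow {z} ⊆ shadow S ∩ shadow {z} := fun u hu =>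
      inter_subset_inter_right (shadow_mono (singleton_subset_iff.2 hu))
    have hone : ∀ u ∈ S, (shadow {u} ∩ shadow {z}).card = 1 := fun u hu =>
      hA.inter u (hSA hu) z hz (fun h => hzS (h ▸ hu))
    have h3 := card_le_card (hsub x hxS)
    have h4 := hone x hxS
    refine ⟨by omega, by omega, fun u hu => eq_of_subset_of_card_le (hsub u hu) ?_⟩
    rw [hone u hu]
    omega
  obtain ⟨z, hz, hzS⟩ := Finset.exists_of_ssubset (hSA.ssubset_of_ne hSeq)
  obtain ⟨hyc, -, hzi⟩ := hgen z hz hzS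
  have hxz : x ≠ z := fun h => hzS (h ▸ hxS)
  -- A second atom in `S` would share with `z` the same upper cover as `x` does.
  have hSx : S = {x} := by
    refine eq_singleton_iff_unique_mem.2 ⟨hxS, fun u hu => ?_⟩
    by_contra hux
    have huz : u ≠ z := fun h => hzS (h ▸ hu)
    obtain ⟨w, hw⟩ := card_pos.1 (by rw [hA.inter x hx z hz hxz]; exact one_pos)
    have hw' := hw
    rw [hzi x hxS, ← hzi u hu] at hw'
    simp only [mem_inter] at hw hw'
    exact hA.triple x hx u (hSA hu) z hz (Ne.symm hux) hxz huz w hw.1 hw'.1 hw.2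
  rw [hSx] at hySI hSI hgen
  have hxc : (shadow {x}).card + 1 = k := by
    have h1 := hM.2.2.2.1 1 {y} {x}
      (fun a ha => (mem_singleton.1 ha) ▸ hB.rank_eq 1 y hy) hSI (by simp)
    have := hA.le_card x hx
    omega
  have hBgen : ∀ w ∈ B 1, w ≠ y → (shadow {w}).card = k := by
    intro w hw hwy
    have hI' : IsInitSeg r lt 1 (insert x {y}) := by rwa [pair_comm]
    have h := swap_ineq hM hB hA hd2.symm hs (S := {y}) (by simpa using hy) hx hw
      (by simpa using hwy) (by simpa using hxy) hI'
    rw [hB.inter y hy w hw hwy.symm] at h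
    have := hB.card_le w hw
    omega
  have hk2 : 2 ≤ k := by
    rw [← hA.card_one, ← card_pair hxz]
    exact card_le_card (by simp [insert_subset_iff, hx, hz])
  by_cases hk3 : k = 2
  · exact ⟨hk3, ⟨x, hx, by omega⟩, ⟨y, hy, by omega⟩⟩
  exfalso
  -- With `k ≥ 3`, whichever the third atom `v` is, `{x, y, v}` has `3 k - 3` upper covers,
  -- one more than three atoms of `A` including `x`.
  obtain ⟨z', hz', hzz'⟩ : ∃ z' ∈ A 1, z' ∉ ({x, z} : Finset α) := by
    refine Finset.exists_mem_notMem_of_card_lt_card ?_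
    rw [card_pair hxz, hA.card_one]
    omega
  simp only [mem_insert, mem_singleton, not_or] at hzz'
  have h3A : ({z', z, x} : Finset α) ⊆ A 1 := by simp [insert_subset_iff, hx, hz, hz']
  have h3c : ({z', z, x} : Finset α).card = 3 := by
    rw [card_insert_of_notMem (by simp [hzz']), card_pair hxz.symm]
  obtain ⟨T, hT, hTc⟩ := exists_initSeg hM 1 3 (h3c ▸ card_le_card fun a ha => by
    simpa using hA.rank_eq 1 a (h3A ha))
  have hmin := hM.2.2.2.1 1 _ T (fun a ha => hA.rank_eq 1 a (h3A ha)) hT (hTc.trans h3c.symm)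
  have hup := three_atoms hA hx hz hz' hxz (Ne.symm hzz'.1) (Ne.symm hzz'.2) hxc
  have hyx2 : ({y, x} : Finset α).card = 2 := card_pair hxy.symm
  have hyxT : ({y, x} : Finset α) ⊆ T := initSeg_subset hM hySI hT (by omega)
  obtain ⟨v, hvT, hv⟩ := Finset.exists_mem_notMem_of_card_lt_card
    (show ({y, x} : Finset α).card < T.card by omega)
  simp only [mem_insert, mem_singleton, not_or] at hv
  have hsub : shadow {x} ∪ shadow {y} ∪ shadow {v} ⊆ shadow T := by
    refine union_subset (union_subset ?_ ?_) ?_ <;> refine shadow_mono (singleton_subset_iff.2 ?_)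
    · exact hyxT (by simp)
    · exact hyxT (by simp)
    · exact hvT
  have hcard := card_le_card hsub
  have sA : ∀ a ∈ A 1, shadow {a} ⊆ A 2 := fun a ha =>
    hA.shadow_subset le_rfl hs (singleton_subset_iff.2 ha)
  have sB : ∀ a ∈ B 1, shadow {a} ⊆ B 2 := fun a ha =>
    hB.shadow_subset le_rfl hs (singleton_subset_iff.2 ha)
  rcases hcov 1 le_rfl (by omega) v (hT.1 v hvT) with hvA | hvB
  · have e1 := card_union_add_card_inter (shadow {x}) (shadow {v})
    have hvk := (hgen v hvA (by simpa using hv.2)).2.1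
    rw [hA.inter x hx v hvA (Ne.symm hv.2)] at e1
    rw [union_right_comm, card_union_of_disjoint
      (hd2.mono (union_subset (sA x hx) (sA v hvA)) (sB y hy))] at hcard
    omega
  · have e1 := card_union_add_card_inter (shadow {y}) (shadow {v})
    have hvk := hBgen v hvB hv.1
    rw [hB.inter y hy v hvB (Ne.symm hv.1)] at e1
    rw [union_assoc, card_union_of_disjoint
      (hd2.mono (sA x hx) (union_subset (sB y hy) (sB v hvB)))] at hcard
    omega

/-- If the full level `n` of `A` is smaller than that of `B` while its shadow is at least as
large, then no Macaulay order exists. When the atoms of `A` come first, level `n` gives a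
contradiction; when those of `B` come first, level `s - n - 1` does, by the rank symmetry of
boxes. -/
lemma not_macaulay (hM : MacaulayWith r lt) (hA : BoxLevels r k s A) (hB : BoxLevels r k s B)
    (hcov : ∀ i, 1 ≤ i → i < s → ∀ x, r x = i → x ∈ A i ∨ x ∈ B i)
    (hdis : ∀ i, 1 ≤ i → i < s → Disjoint (A i) (B i))
    (n : ℕ) (h1 : 1 ≤ n) (h2 : n + 1 < s)
    (hlt : (A n).card < (B n).card) (hge : (B (n + 1)).card ≤ (A (n + 1)).card) : False := by
  have hcov' : ∀ i, 1 ≤ i → i < s → ∀ x, r x = i → x ∈ B i ∨ x ∈ A i :=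
    fun i hi hi' x hx => (hcov i hi hi' x hx).symm
  have hdis' : ∀ i, 1 ≤ i → i < s → Disjoint (B i) (A i) := fun i hi hi' => (hdis i hi hi').symm
  have hAI : ¬ IsInitSeg r lt 1 (A 1) := fun hI =>
    no_initSeg hM hA hB hcov hdis n h1 h2 (initSeg_level hM hA hI n h1 (by omega))
      hlt.le hge (Or.inl hlt)
  have hBI : ¬ IsInitSeg r lt 1 (B 1) := by
    intro hI
    have a1 := hA.card_symm n (by omega)
    have b1 := hB.card_symm n (by omega)
    have a2 := hA.card_symm (n + 1) (by omega)
    have b2 := hB.card_symm (n + 1) (by omega)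
    have e : s - n = s - (n + 1) + 1 := by omega
    rw [e] at a1 b1
    exact no_initSeg hM hB hA hcov' hdis' (s - (n + 1)) (by omega) (by omega)
      (initSeg_level hM hB hI _ (by omega) (by omega)) (by omega) (by omega) (Or.inr (by omega))
  have hthin : k = 2 → (∃ x ∈ A 1, (shadow {x}).card = 1) →
      (∃ y ∈ B 1, (shadow {y}).card = 1) → False := by
    rintro hk ⟨x, hx, hxc⟩ ⟨y, hy, hyc⟩
    have := hA.thin hk x hx hxc n h1 (by omega)
    have := hB.thin hk y hy hyc n h1 (by omega)
    omega
  -- Level 1 is nonempty: otherwise `A 1` would vacuously be initial.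
  have hne : (univ.filter (fun x => r x = 1)).Nonempty := by
    by_contra hne
    rw [not_nonempty_iff_eq_empty, filter_eq_empty_iff] at hne
    exact hAI ⟨fun x hx => absurd (hA.rank_eq 1 x hx) (hne (mem_univ x)),
      fun x hx => absurd (hA.rank_eq 1 x hx) (hne (mem_univ x))⟩
  obtain ⟨x, hx, hmax⟩ := exists_first hM _ hne
  simp only [mem_filter, mem_univ, true_and] at hx hmax
  rcases hcov 1 le_rfl (by omega) x hx with h | h
  · rcases atoms_of_first_mem hM hA hB hcov hdis (by omega) h hmax with h | ⟨hk, ha, hb⟩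
    · exact hAI h
    · exact hthin hk ha hb
  · rcases atoms_of_first_mem hM hB hA hcov' hdis' (by omega) h hmax with h | ⟨hk, hb, ha⟩
    · exact hBI h
    · exact hthin hk ha hb

end Segments

/-! ### Covers and levels in a box -/

section Boxes
open Classical

variable {k : ℕ} {d : Fin k → ℕ}

lemma boxFRank_strictMono : StrictMono (boxFRank : BoxF d → ℕ) := by
  intro x y h
  obtain ⟨hle, j, hj⟩ := Pi.lt_def.1 h
  exact sum_lt_sum (fun i _ => hle i) ⟨j, mem_univ j, hj⟩

lemma covBy_of_rank {x y : BoxF d} (h : x < y) (hr : boxFRank y = boxFRank x + 1) : x ⋖ y := by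
  refine ⟨h, fun z h1 h2 => ?_⟩
  have := boxFRank_strictMono h1
  have := boxFRank_strictMono h2
  omega

lemma box_covBy_iff {x y : BoxF d} :
    x ⋖ y ↔ ∃ j, (y j).val = (x j).val + 1 ∧ ∀ i, i ≠ j → x i = y i := by
  rw [Pi.covBy_iff]
  refine exists_congr fun j => and_congr_left fun _ => ?_
  rw [Fin.covBy_iff, Nat.covBy_iff_add_one_eq, eq_comm]

lemma boxFRank_of_covBy {x y : BoxF d} (h : x ⋖ y) : boxFRank y = boxFRank x + 1 := by
  obtain ⟨j, hj, hi⟩ := box_covBy_iff.1 h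
  unfold boxFRank
  rw [← add_sum_erase _ _ (mem_univ j), ← add_sum_erase univ (fun i => (x i).val) (mem_univ j), hj,
    sum_congr rfl fun i hi' => by rw [← hi i (ne_of_mem_erase hi')]]
  ring

lemma boxFRank_eq_zero {x : BoxF d} : boxFRank x = 0 ↔ x = ⊥ := by
  constructor
  · intro h
    by_contra hx
    have := boxFRank_strictMono (bot_lt_iff_ne_bot.2 hx)
    omega
  · rintro rfl
    exact sum_eq_zero fun i _ => rfl

lemma boxFRank_top : boxFRank (⊤ : BoxF d) = ∑ i, d i := by
  simp [boxFRank, Fin.top_eq_last]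

lemma boxFRank_eq_top {x : BoxF d} : boxFRank x = ∑ i, d i ↔ x = ⊤ := by
  rw [← boxFRank_top]
  constructor
  · intro h
    by_contra hx
    have := boxFRank_strictMono (lt_top_iff_ne_top.2 hx)
    omega
  · rintro rfl
    rfl

/-- The upper covers of `x` raise by one a coordinate that is not yet maximal. -/
lemma card_upper_covers (x : BoxF d) :
    (univ.filter (fun y => x ⋖ y)).card = (univ.filter (fun j => (x j).val < d j)).card := by
  symm
  refine card_bij (fun j hj => Function.update x j ⟨(x j).val + 1, by simpa using hj⟩) ?_ ?_ ?_
  · intro j hj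
    simp only [mem_filter, mem_univ, true_and, box_covBy_iff]
    exact ⟨j, by simp, fun i hi => by simp [hi]⟩
  · intro i hi j hj h
    by_contra hne
    have := congrArg Fin.val (congrFun h i)
    simp [hne] at this
  · intro y hy
    simp only [mem_filter, mem_univ, true_and, box_covBy_iff] at hy
    obtain ⟨j, hj, hi⟩ := hy
    refine ⟨j, by simp only [mem_filter, mem_univ, true_and]; have := (y j).isLt; omega, ?_⟩
    ext i
    by_cases hij : i = j
    · subst hij
      simp [hj]
    · simp [hij, hi i hij]

lemma exists_upper_cover {x : BoxF d} (h : x ≠ ⊤) : ∃ y, x ⋖ y := by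
  have hx := mt boxFRank_eq_top.1 h
  by_contra! hn
  have h0 : (univ.filter (fun y => x ⋖ y)).card = 0 := by simp [hn]
  rw [card_upper_covers, card_eq_zero, filter_eq_empty_iff] at h0
  exact hx (sum_congr rfl fun i _ => by
    have := h0 (mem_univ i)
    have := (x i).isLt
    omega)

lemma exists_lower_cover {y : BoxF d} (h : y ≠ ⊥) : ∃ x, x ⋖ y := by
  obtain ⟨j, hj⟩ : ∃ j, (y j).val ≠ 0 := by
    by_contra! hn
    exact h (boxFRank_eq_zero.1 (sum_eq_zero fun i _ => hn i))
  refine ⟨Function.update y j ⟨(y j).val - 1, by have := (y j).isLt; omega⟩,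
    box_covBy_iff.2 ⟨j, ?_, fun i hi => by simp [hi]⟩⟩
  simp
  omega

/-- `x ↦ d - x` exchanges levels `i` and `s - i`. -/
lemma card_level_symm {s : ℕ} (hs : ∑ i, d i = s) {i : ℕ} (hi : i ≤ s) :
    (univ.filter (fun x : BoxF d => boxFRank x = s - i)).card =
      (univ.filter (fun x : BoxF d => boxFRank x = i)).card := by
  have hrev : ∀ x : BoxF d, boxFRank (fun j => (x j).rev : BoxF d) + boxFRank x = s := by
    intro x
    unfold boxFRank
    rw [← sum_add_distrib, ← hs]
    refine sum_congr rfl fun j _ => ?_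
    have := (x j).isLt
    rw [Fin.val_rev]
    omega
  refine card_bij (fun x _ => fun j => (x j).rev) ?_ ?_ ?_
  · intro x hx
    have := hrev x
    simp only [mem_filter, mem_univ, true_and] at hx ⊢
    omega
  · intro x _ y _ h
    funext j
    exact Fin.rev_injective (congrFun h j)
  · intro y hy
    refine ⟨fun j => (y j).rev, ?_, by simp⟩
    have := hrev y
    simp only [mem_filter, mem_univ, true_and] at hy ⊢
    omega

lemma card_atoms (hd : ∀ i, 1 ≤ d i) :
    (univ.filter (fun x : BoxF d => boxFRank x = 1)).card = k := by
  have h := card_upper_covers (⊥ : BoxF d)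
  have e1 : (univ.filter (fun j => ((⊥ : BoxF d) j).val < d j)) = univ := by
    refine filter_true_of_mem fun j _ => ?_
    exact hd j
  rw [e1, card_univ, Fintype.card_fin] at h
  refine Eq.trans (congrArg card ?_) h
  ext x
  simp only [mem_filter, mem_univ, true_and]
  have h0 : boxFRank (⊥ : BoxF d) = 0 := boxFRank_eq_zero.2 rfl
  constructor
  · intro hx
    refine covBy_of_rank (bot_lt_iff_ne_bot.2 ?_) (by omega)
    rintro rfl
    omega
  · intro hx
    rw [boxFRank_of_covBy hx, h0]

lemma atom_upper_covers (hd : ∀ i, 1 ≤ d i) {x : BoxF d} (hx : boxFRank x = 1) :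
    k ≤ (univ.filter (fun y => x ⋖ y)).card + 1 := by
  rw [card_upper_covers]
  have h := card_filter_add_card_filter_not (s := univ) (fun j => (x j).val < d j)
  rw [card_univ, Fintype.card_fin] at h
  -- A maximal coordinate is positive, and the coordinates add up to 1.
  have : (univ.filter (fun j => ¬ (x j).val < d j)).card ≤ 1 := by
    rw [card_eq_sum_ones]
    refine le_trans ?_ hx.le
    refine (sum_le_sum fun j hj => ?_).trans (sum_le_sum_of_subset (filter_subset _ univ))
    have := hd j
    simp only [mem_filter] at hj
    omega
  omega

lemma inf_atoms {x y : BoxF d} (hx : boxFRank x = 1) (hy : boxFRank y = 1) (h : x ≠ y) :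
    x ⊓ y = ⊥ := by
  have hlt : x ⊓ y < x := by
    refine inf_le_left.lt_of_ne fun he => ?_
    have hxy : x < y := (inf_eq_left.1 he).lt_of_ne h
    have := boxFRank_strictMono hxy
    omega
  have := boxFRank_strictMono hlt
  exact boxFRank_eq_zero.1 (by omega)

lemma covBy_sup_atoms {x y : BoxF d} (hx : boxFRank x = 1) (hy : boxFRank y = 1) (h : x ≠ y) :
    x ⋖ x ⊔ y := by
  have h1 : boxFRank (x ⊔ y) + boxFRank (x ⊓ y) = boxFRank x + boxFRank y := by
    simp only [boxFRank, ← sum_add_distrib]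
    refine sum_congr rfl fun i _ => ?_
    rcases le_total (x i) (y i) with h | h <;> simp [h, add_comm]
  rw [inf_atoms hx hy h, boxFRank_eq_zero.2 rfl] at h1
  refine covBy_of_rank (le_sup_left.lt_of_ne fun he => ?_) (by omega)
  rw [← he] at h1
  omega

lemma eq_sup_of_covBy {x y w : BoxF d} (hx : boxFRank x = 1) (hy : boxFRank y = 1) (h : x ≠ y)
    (hxw : x ⋖ w) (hyw : y ⋖ w) : w = x ⊔ y :=
  ((hxw.eq_or_eq le_sup_left (sup_le hxw.le hyw.le)).resolve_left
    (covBy_sup_atoms hx hy h).lt.ne').symm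

/-- By distributivity, an atom below the join of two atoms is one of them. -/
lemma no_triple {x y z w : BoxF d} (hx : boxFRank x = 1) (hy : boxFRank y = 1)
    (hz : boxFRank z = 1) (hxy : x ≠ y) (hxz : x ≠ z) (hyz : y ≠ z)
    (hxw : x ⋖ w) (hyw : y ⋖ w) : ¬ z ⋖ w := by
  intro hzw
  have hle : z ≤ x ⊔ y := eq_sup_of_covBy hx hy hxy hxw hyw ▸ hzw.le
  have : z = ⊥ := by
    rw [← inf_eq_left.2 hle, inf_sup_left, inf_atoms hz hx hxz.symm, inf_atoms hz hy hyz.symm,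
      sup_idem]
  rw [← boxFRank_eq_zero] at this
  omega

/-- An element of level `i` of a box with two sides, one of them a two-element chain, is
determined by its coordinate on that side. -/
lemma card_level_thin {d : Fin 2 → ℕ} {s : ℕ} (hs : ∑ i, d i = s) {j : Fin 2} (hj : d j = 1)
    {i : ℕ} (h1 : 1 ≤ i) (h2 : i < s) :
    (univ.filter (fun x : BoxF d => boxFRank x = i)).card = 2 := by
  obtain ⟨l, hl, hf⟩ : ∃ l, l ≠ j ∧ ∀ f : Fin 2 → ℕ, ∑ i, f i = f j + f l := by
    fin_cases j
    · exact ⟨1, by simp, fun f => by simp [Fin.sum_univ_two]⟩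
    · exact ⟨0, by simp, fun f => by simp [Fin.sum_univ_two, add_comm]⟩
  have hjl : ∀ m, m ≠ j → m = l := by intro m hm; omega
  have hr : ∀ x : BoxF d, boxFRank x = (x j).val + (x l).val := fun x => hf fun m => (x m).val
  have hd := hf d
  have : (univ.filter (fun x : BoxF d => boxFRank x = i)).card = (range 2).card := by
    refine card_bij (fun x _ => (x j).val) ?_ ?_ ?_
    · intro x _
      have := (x j).isLt
      rw [mem_range]
      omega
    · intro x hx y hy h
      simp only [mem_filter, mem_univ, true_and, hr] at hx hy
      funext m
      apply Fin.ext
      by_cases hm : m = j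
      · exact hm ▸ h
      · rw [hjl m hm]
        omega
    · intro c hc
      rw [mem_range] at hc
      let x : BoxF d := fun m => if m = j then Fin.ofNat _ c else Fin.ofNat _ (i - c)
      have hxj : (x j).val = c := by
        simp only [x, if_true, Fin.val_ofNat]
        exact Nat.mod_eq_of_lt (by omega)
      have hxl : (x l).val = i - c := by
        simp only [x, if_neg hl, Fin.val_ofNat]
        exact Nat.mod_eq_of_lt (by omega)
      refine ⟨x, ?_, hxj⟩
      simp only [mem_filter, mem_univ, true_and, hr]
      omega
  simpa using this

/-! ### Boxes embedded in a larger poset -/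

/-- The image of level `i` of a box under a map. -/
noncomputable def boxLevel (E : BoxF d → α) (i : ℕ) : Finset α :=
  (univ.filter (fun x => boxFRank x = i)).image E

variable [PartialOrder α] [Fintype α] {r : α → ℕ}

/-- If everything above a non-bottom element of an embedded box belongs to the box, then upper
covers in the ambient poset are upper covers in the box. -/
lemma mem_shadow_embed (E : BoxF d ↪o α) (hE : ∀ x, x ≠ ⊥ → ∀ y, E x ≤ y → ∃ z, y = E z)
    {x : BoxF d} (hx : x ≠ ⊥) {y : α} :
    y ∈ shadow {E x} ↔ ∃ z, x ⋖ z ∧ E z = y := by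
  simp only [mem_shadow, mem_singleton, exists_eq_left]
  constructor
  · intro h
    obtain ⟨z, rfl⟩ := hE x hx y h.le
    exact ⟨z, h.of_image E, rfl⟩
  · rintro ⟨z, hz, rfl⟩
    refine ⟨E.lt_iff_lt.2 hz.lt, fun w h1 h2 => ?_⟩
    obtain ⟨u, rfl⟩ := hE x hx w h1.le
    exact hz.2 (E.lt_iff_lt.1 h1) (E.lt_iff_lt.1 h2)

lemma shadow_embed (E : BoxF d ↪o α) (hE : ∀ x, x ≠ ⊥ → ∀ y, E x ≤ y → ∃ z, y = E z)
    {x : BoxF d} (hx : x ≠ ⊥) : shadow {E x} = (univ.filter (fun z => x ⋖ z)).image E := by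
  ext y
  simp [mem_shadow_embed E hE hx]

lemma boxLevels_embed (hd : ∀ i, 1 ≤ d i) {s : ℕ} (hs : ∑ i, d i = s) (E : BoxF d ↪o α)
    (hE : ∀ x, x ≠ ⊥ → ∀ y, E x ≤ y → ∃ z, y = E z) (hr : ∀ x, r (E x) = boxFRank x) :
    BoxLevels r k s (boxLevel E) := by
  have hcard : ∀ i, (boxLevel E i).card =
      (univ.filter (fun x : BoxF d => boxFRank x = i)).card :=
    fun i => card_image_of_injective _ E.injective
  have hmem : ∀ i y, y ∈ boxLevel E i ↔ ∃ x, boxFRank x = i ∧ E x = y := by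
    simp [boxLevel]
  have hbot : ∀ {x : BoxF d} {i : ℕ}, 1 ≤ i → boxFRank x = i → x ≠ ⊥ := by
    intro x i hi hx h
    have := boxFRank_eq_zero.2 h
    omega
  have hsc : ∀ {x : BoxF d}, boxFRank x = 1 → (shadow {E x}).card =
      (univ.filter (fun y => x ⋖ y)).card := fun hx => by
    rw [shadow_embed E hE (hbot le_rfl hx), card_image_of_injective _ E.injective]
  refine ⟨?_, ?_, ?_, ?_, ?_, ?_, ?_, ?_, ?_, ?_⟩
  · intro i y hy
    obtain ⟨x, hx, rfl⟩ := (hmem i y).1 hy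
    rw [hr, hx]
  · intro i h1 h2
    ext y
    rw [hmem]
    constructor
    · intro hy
      obtain ⟨a, ha, hay⟩ := mem_shadow.1 hy
      obtain ⟨x, hx, rfl⟩ := (hmem i a).1 ha
      obtain ⟨z, hz, rfl⟩ := (mem_shadow_embed E hE (hbot h1 hx)).1
        (mem_shadow.2 ⟨_, mem_singleton_self _, hay⟩)
      exact ⟨z, by rw [boxFRank_of_covBy hz, hx], rfl⟩
    · rintro ⟨z, hz, rfl⟩
      obtain ⟨x, hx⟩ := exists_lower_cover (hbot (by omega) hz)
      have hxr : boxFRank x = i := by have := boxFRank_of_covBy hx; omega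
      exact shadow_mono (singleton_subset_iff.2 ((hmem i _).2 ⟨x, hxr, rfl⟩))
        ((mem_shadow_embed E hE (hbot h1 hxr)).2 ⟨z, hx, rfl⟩)
  · intro i h1 h2 y hy
    obtain ⟨x, hx, rfl⟩ := (hmem i y).1 hy
    obtain ⟨z, hz⟩ := exists_upper_cover (x := x) (fun h => by
      have := boxFRank_eq_top.2 h
      omega)
    exact ⟨E z, (mem_shadow_embed E hE (hbot h1 hx)).2 ⟨z, hz, rfl⟩⟩
  · intro i hi
    rw [hcard, hcard, card_level_symm hs hi]
  · rw [hcard, card_atoms hd]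
  · intro y hy
    obtain ⟨x, hx, rfl⟩ := (hmem 1 y).1 hy
    rw [hsc hx]
    exact atom_upper_covers hd hx
  · intro y hy
    obtain ⟨x, hx, rfl⟩ := (hmem 1 y).1 hy
    rw [hsc hx, card_upper_covers]
    exact (card_le_univ _).trans (by simp)
  · intro a ha b hb hab
    obtain ⟨x, hx, rfl⟩ := (hmem 1 a).1 ha
    obtain ⟨y, hy, rfl⟩ := (hmem 1 b).1 hb
    have hxy : x ≠ y := fun h => hab (congrArg E h)
    rw [card_eq_one]
    refine ⟨E (x ⊔ y), ?_⟩
    ext w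
    rw [mem_inter, mem_shadow_embed E hE (hbot le_rfl hx), mem_shadow_embed E hE (hbot le_rfl hy),
      mem_singleton]
    constructor
    · rintro ⟨⟨z, hxz, rfl⟩, ⟨z', hyz, hz'⟩⟩
      obtain rfl := E.injective hz'
      rw [eq_sup_of_covBy hx hy hxy hxz hyz]
    · rintro rfl
      exact ⟨⟨_, covBy_sup_atoms hx hy hxy, rfl⟩,
        ⟨_, sup_comm x y ▸ covBy_sup_atoms hy hx hxy.symm, rfl⟩⟩
  · intro a ha b hb c hc hab hac hbc w hwa hwb hwc
    obtain ⟨x, hx, rfl⟩ := (hmem 1 a).1 ha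
    obtain ⟨y, hy, rfl⟩ := (hmem 1 b).1 hb
    obtain ⟨z, hz, rfl⟩ := (hmem 1 c).1 hc
    rw [mem_shadow_embed E hE (hbot le_rfl hx)] at hwa
    rw [mem_shadow_embed E hE (hbot le_rfl hy)] at hwb
    rw [mem_shadow_embed E hE (hbot le_rfl hz)] at hwc
    obtain ⟨u, hxu, rfl⟩ := hwa
    obtain ⟨u', hyu, hu'⟩ := hwb
    obtain ⟨u'', hzu, hu''⟩ := hwc
    obtain rfl := E.injective hu'
    obtain rfl := E.injective hu''
    exact no_triple hx hy hz (fun h => hab (congrArg E h)) (fun h => hac (congrArg E h))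
      (fun h => hbc (congrArg E h)) hxu hyu hzu
  · intro hk y hy hyc i h1 h2
    subst hk
    obtain ⟨x, hx, rfl⟩ := (hmem 1 y).1 hy
    rw [hsc hx, card_upper_covers] at hyc
    obtain ⟨j, hj⟩ : ∃ j, ¬ (x j).val < d j := by
      by_contra! hn
      rw [filter_true_of_mem fun j _ => hn j] at hyc
      simp at hyc
    have hxj : (x j).val ≤ boxFRank x :=
      single_le_sum (f := fun i => (x i).val) (fun _ _ => Nat.zero_le _) (mem_univ j)
    have := hd j
    rw [hcard]
    exact card_level_thin hs (j := j) (by omega) h1 h2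

end Boxes

/-! ### The two components of the diamond product -/

section Components
open Classical

variable {P Q : Type*} [PartialOrder P] [PartialOrder Q] [OrderBot P] [OrderBot Q]
    [OrderTop P] [OrderTop Q]

/-- The canonical map of the whole first factor, endpoints included, into the diamond product. -/
noncomputable def inlFun (p : P) : Diamond P Q :=
  if h : p ≠ ⊥ ∧ p ≠ ⊤ then diamondInl ⟨p, h⟩ else if p = ⊥ then ⊥ else ⊤

/-- The canonical map of the whole second factor, endpoints included, into the diamond product. -/
noncomputable def inrFun (q : Q) : Diamond P Q :=
  if h : q ≠ ⊥ ∧ q ≠ ⊤ then diamondInr ⟨q, h⟩ else if q = ⊥ then ⊥ else ⊤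

lemma inlFun_le (hP : (⊥ : P) ≠ ⊤) (p p' : P) :
    (inlFun p : Diamond P Q) ≤ inlFun p' ↔ p ≤ p' := by
  by_cases h1 : p = ⊥
  · simp [inlFun, h1]
  by_cases h2 : p = ⊤ <;> by_cases h3 : p' = ⊥ <;> by_cases h4 : p' = ⊤ <;>
    simp_all [inlFun, diamondInl, eq_comm]

lemma inrFun_le (hQ : (⊥ : Q) ≠ ⊤) (q q' : Q) :
    (inrFun q : Diamond P Q) ≤ inrFun q' ↔ q ≤ q' := by
  by_cases h1 : q = ⊥
  · simp [inrFun, h1]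
  by_cases h2 : q = ⊤ <;> by_cases h3 : q' = ⊥ <;> by_cases h4 : q' = ⊤ <;>
    simp_all [inrFun, diamondInr, eq_comm]

lemma diamond_cases (y : Diamond P Q) :
    y = ⊥ ∨ y = ⊤ ∨ (∃ p, y = diamondInl p) ∨ ∃ q, y = diamondInr q := by
  induction y using WithBot.recBotCoe with
  | bot => exact Or.inl rfl
  | coe y =>
    induction y using WithTop.recTopCoe with
    | top => exact Or.inr (Or.inl rfl)
    | coe y =>
      rcases y with p | q
      · exact Or.inr (Or.inr (Or.inl ⟨p, rfl⟩))
      · exact Or.inr (Or.inr (Or.inr ⟨q, rfl⟩))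

lemma inlFun_bot : (inlFun (⊥ : P) : Diamond P Q) = ⊥ := by simp [inlFun]

lemma inrFun_bot : (inrFun (⊥ : Q) : Diamond P Q) = ⊥ := by simp [inrFun]

lemma inlFun_top (hP : (⊥ : P) ≠ ⊤) : (inlFun (⊤ : P) : Diamond P Q) = ⊤ := by
  simp [inlFun, hP.symm]

lemma inrFun_top (hQ : (⊥ : Q) ≠ ⊤) : (inrFun (⊤ : Q) : Diamond P Q) = ⊤ := by
  simp [inrFun, hQ.symm]

lemma inlFun_mid (p : {p : P // p ≠ ⊥ ∧ p ≠ ⊤}) :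
    (inlFun p.1 : Diamond P Q) = diamondInl p := by
  simp [inlFun, p.2.1, p.2.2]

lemma inrFun_mid (q : {q : Q // q ≠ ⊥ ∧ q ≠ ⊤}) :
    (inrFun q.1 : Diamond P Q) = diamondInr q := by
  simp [inrFun, q.2.1, q.2.2]

lemma inlFun_upper (hP : (⊥ : P) ≠ ⊤) (p : P) (hp : p ≠ ⊥) (y : Diamond P Q)
    (h : inlFun p ≤ y) : ∃ z, y = inlFun z := by
  rcases diamond_cases y with rfl | rfl | ⟨z, rfl⟩ | ⟨z, rfl⟩
  · exact ⟨⊥, inlFun_bot.symm⟩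
  · exact ⟨⊤, (inlFun_top hP).symm⟩
  · exact ⟨z.1, (inlFun_mid z).symm⟩
  · exfalso
    by_cases h2 : p = ⊤ <;> simp_all [inlFun, diamondInl, diamondInr]

lemma inrFun_upper (hQ : (⊥ : Q) ≠ ⊤) (q : Q) (hq : q ≠ ⊥) (y : Diamond P Q)
    (h : inrFun q ≤ y) : ∃ z, y = inrFun z := by
  rcases diamond_cases y with rfl | rfl | ⟨z, rfl⟩ | ⟨z, rfl⟩
  · exact ⟨⊥, inrFun_bot.symm⟩
  · exact ⟨⊤, (inrFun_top hQ).symm⟩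
  · exfalso
    by_cases h2 : q = ⊤ <;> simp_all [inrFun, diamondInl, diamondInr]
  · exact ⟨z.1, (inrFun_mid z).symm⟩

lemma exists_inlFun_iff (hP : (⊥ : P) ≠ ⊤) (x : Diamond P Q) :
    (x = ⊥ ∨ x = ⊤ ∨ ∃ p, x = diamondInl p) ↔ ∃ p, inlFun p = x := by
  constructor
  · rintro (rfl | rfl | ⟨z, rfl⟩)
    exacts [⟨⊥, inlFun_bot⟩, ⟨⊤, inlFun_top hP⟩, ⟨z.1, inlFun_mid z⟩]
  · rintro ⟨p, rfl⟩
    by_cases h1 : p = ⊥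
    · exact Or.inl (by rw [h1, inlFun_bot])
    by_cases h2 : p = ⊤
    · exact Or.inr (Or.inl (by rw [h2, inlFun_top hP]))
    · exact Or.inr (Or.inr ⟨⟨p, h1, h2⟩, inlFun_mid ⟨p, h1, h2⟩⟩)

lemma exists_inrFun_iff (hQ : (⊥ : Q) ≠ ⊤) (x : Diamond P Q) :
    (x = ⊥ ∨ x = ⊤ ∨ ∃ q, x = diamondInr q) ↔ ∃ q, inrFun q = x := by
  constructor
  · rintro (rfl | rfl | ⟨z, rfl⟩)
    exacts [⟨⊥, inrFun_bot⟩, ⟨⊤, inrFun_top hQ⟩, ⟨z.1, inrFun_mid z⟩]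
  · rintro ⟨q, rfl⟩
    by_cases h1 : q = ⊥
    · exact Or.inl (by rw [h1, inrFun_bot])
    by_cases h2 : q = ⊤
    · exact Or.inr (Or.inl (by rw [h2, inrFun_top hQ]))
    · exact Or.inr (Or.inr ⟨⟨q, h1, h2⟩, inrFun_mid ⟨q, h1, h2⟩⟩)

/-- The components meet only in the common endpoints. -/
lemma inl_inr_endpoint (p : P) (q : Q) (h : (inlFun p : Diamond P Q) = inrFun q) :
    p = ⊥ ∨ p = ⊤ := by
  by_contra! hp
  rw [inlFun_mid ⟨p, hp⟩] at h
  by_cases h1 : q = ⊥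
  · rw [h1, inrFun_bot] at h
    exact WithBot.coe_ne_bot h
  by_cases h2 : q = ⊤
  · subst h2
    have hQ : (⊥ : Q) ≠ ⊤ := Ne.symm h1
    rw [inrFun_top hQ] at h
    exact WithTop.coe_ne_top (WithBot.coe_injective h)
  · rw [inrFun_mid ⟨q, h1, h2⟩] at h
    exact Sum.inl_ne_inr (WithTop.coe_injective (WithBot.coe_injective h))

lemma rank_inlFun {rP : P → ℕ} {rQ : Q → ℕ} {s : ℕ} (h0 : rP ⊥ = 0) (h1 : rP ⊤ = s) (p : P) :
    diamondRank rP rQ s (inlFun p) = rP p := by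
  by_cases hb : p = ⊥
  · rw [hb, inlFun_bot, h0]
    rfl
  by_cases ht : p = ⊤
  · subst ht
    rw [inlFun_top (Ne.symm hb), h1]
    rfl
  · exact congrArg (diamondRank rP rQ s) (inlFun_mid ⟨p, hb, ht⟩)

lemma rank_inrFun {rP : P → ℕ} {rQ : Q → ℕ} {s : ℕ} (h0 : rQ ⊥ = 0) (h1 : rQ ⊤ = s) (q : Q) :
    diamondRank rP rQ s (inrFun q) = rQ q := by
  by_cases hb : q = ⊥
  · rw [hb, inrFun_bot, h0]
    rfl
  by_cases ht : q = ⊤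
  · subst ht
    rw [inrFun_top (Ne.symm hb), h1]
    rfl
  · exact congrArg (diamondRank rP rQ s) (inrFun_mid ⟨q, hb, ht⟩)

end Components

open Classical in
/-- If in the diamond product of two k-dimensional box posets of the same rank s (no side of
length 1) the full level n of one box (n < s - 1) is smaller than the full level n of the
other but has at least as large an upper shadow (or vice versa), then the diamond product is
not Macaulay. -/
theorem stmt12 {k : ℕ} (d e : Fin k → ℕ) (hd : ∀ i, 1 ≤ d i) (he : ∀ i, 1 ≤ e i)
    (s n : ℕ) (hsd : ∑ i, d i = s) (hse : ∑ i, e i = s) (hn : n + 1 < s)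
    (A B : Finset (Diamond (BoxF d) (BoxF e)))
    (hA : A = Finset.univ.filter (fun x => diamondRank boxFRank boxFRank s x = n ∧
      (x = ⊥ ∨ x = ⊤ ∨ ∃ p, x = diamondInl p)))
    (hB : B = Finset.univ.filter (fun x => diamondRank boxFRank boxFRank s x = n ∧
      (x = ⊥ ∨ x = ⊤ ∨ ∃ q, x = diamondInr q)))
    (h : (A.card < B.card ∧ (shadow B).card ≤ (shadow A).card) ∨
         (B.card < A.card ∧ (shadow A).card ≤ (shadow B).card)) :
    ¬ IsMacaulay (diamondRank boxFRank boxFRank s :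
      Diamond (BoxF d) (BoxF e) → ℕ) := by 
  rintro ⟨lt, hM⟩
  have hbt : ∀ {f : Fin k → ℕ}, ∑ i, f i = s → (⊥ : BoxF f) ≠ ⊤ := by
    intro f hf h
    have h1 := boxFRank_eq_zero.2 h.symm
    rw [boxFRank_top] at h1
    omega
  have hP := hbt hsd
  have hQ := hbt hse
  have h0 : ∀ f : Fin k → ℕ, boxFRank (⊥ : BoxF f) = 0 := fun f => boxFRank_eq_zero.2 rfl
  let E : BoxF d ↪o Diamond (BoxF d) (BoxF e) := OrderEmbedding.ofMapLEIff inlFun (inlFun_le hP)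
  let F : BoxF e ↪o Diamond (BoxF d) (BoxF e) := OrderEmbedding.ofMapLEIff inrFun (inrFun_le hQ)
  have hrE : ∀ x, diamondRank boxFRank boxFRank s (E x) = boxFRank x :=
    rank_inlFun (h0 d) (boxFRank_top.trans hsd)
  have hrF : ∀ x, diamondRank boxFRank boxFRank s (F x) = boxFRank x :=
    rank_inrFun (h0 e) (boxFRank_top.trans hse)
  have hEL := boxLevels_embed hd hsd E (inlFun_upper hP) hrE
  have hFL := boxLevels_embed he hse F (inrFun_upper hQ) hrF
  have hAE : A = boxLevel E n := by
    ext x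
    rw [hA, mem_filter, exists_inlFun_iff hP]
    simp only [boxLevel, mem_image, mem_filter, mem_univ, true_and]
    constructor
    · rintro ⟨hx, p, rfl⟩
      exact ⟨p, (hrE p).symm.trans hx, rfl⟩
    · rintro ⟨p, hp, rfl⟩
      exact ⟨(hrE p).trans hp, p, rfl⟩
  have hBF : B = boxLevel F n := by
    ext x
    rw [hB, mem_filter, exists_inrFun_iff hQ]
    simp only [boxLevel, mem_image, mem_filter, mem_univ, true_and]
    constructor
    · rintro ⟨hx, p, rfl⟩
      exact ⟨p, (hrF p).symm.trans hx, rfl⟩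
    · rintro ⟨p, hp, rfl⟩
      exact ⟨(hrF p).trans hp, p, rfl⟩
  have hdis : ∀ i, 1 ≤ i → i < s → Disjoint (boxLevel E i) (boxLevel F i) := by
    intro i h1 h2
    rw [disjoint_left]
    intro x hx hy
    simp only [boxLevel, mem_image, mem_filter, mem_univ, true_and] at hx hy
    obtain ⟨p, hp, rfl⟩ := hx
    obtain ⟨q, -, hpq⟩ := hy
    rcases inl_inr_endpoint p q hpq.symm with rfl | rfl
    · rw [h0] at hp
      omega
    · rw [boxFRank_top] at hp
      omega
  have hcov : ∀ i, 1 ≤ i → i < s → ∀ x : Diamond (BoxF d) (BoxF e),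
      diamondRank boxFRank boxFRank s x = i → x ∈ boxLevel E i ∨ x ∈ boxLevel F i := by
    intro i h1 h2 x hx
    simp only [boxLevel, mem_image, mem_filter, mem_univ, true_and]
    have hEF : (∃ p, E p = x) ∨ ∃ q, F q = x := by
      rcases diamond_cases x with h | h | h | h
      · exact Or.inl ((exists_inlFun_iff hP x).1 (Or.inl h))
      · exact Or.inl ((exists_inlFun_iff hP x).1 (Or.inr (Or.inl h)))
      · exact Or.inl ((exists_inlFun_iff hP x).1 (Or.inr (Or.inr h)))
      · exact Or.inr ((exists_inrFun_iff hQ x).1 (Or.inr (Or.inr h)))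
    rcases hEF with ⟨p, rfl⟩ | ⟨q, rfl⟩
    · exact Or.inl ⟨p, (hrE p).symm.trans hx, rfl⟩
    · exact Or.inr ⟨q, (hrF q).symm.trans hx, rfl⟩
  -- Level 0 of both components is the common least element, so `n = 0` violates `h`.
  rcases Nat.eq_zero_or_pos n with rfl | hn1
  · have hA1 : A.card = 1 := by
      rw [hAE, card_eq_one]
      exact ⟨E ⊥, by simp [boxLevel, boxFRank_eq_zero, filter_eq']⟩
    have hB1 : B.card = 1 := by
      rw [hBF, card_eq_one]
      exact ⟨F ⊥, by simp [boxLevel, boxFRank_eq_zero, filter_eq']⟩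
    omega
  rw [hAE, hBF, hEL.shadow_eq n hn1 hn, hFL.shadow_eq n hn1 hn] at h
  rcases h with ⟨h1, h2⟩ | ⟨h1, h2⟩
  · exact not_macaulay hM hEL hFL hcov hdis n hn1 hn h1 h2
  · exact not_macaulay hM hFL hEL (fun i hi hi' x hx => (hcov i hi hi' x hx).symm)
      (fun i hi hi' => (hdis i hi hi').symm) n hn1 hn h1 h2
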